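/- For every integer k ≥ 4, if G is a graph with no cycle of length 5 and no cycle of length 2k, and Δ(G) ≥ 1, then the strong clique number of G is at most kΔ(G) − (k−1). -/

import Mathlib

/-- A strong clique of `G`: a set of edges of `G` such that every pair of edges
either shares an endpoint or is joined by an edge of `G`. -/
def IsStrongClique {V : Type*} (G : SimpleGraph V) (S : Set (Sym2 V)) : Prop :=
  S ⊆ G.edgeSet ∧
    ∀ e ∈ S, ∀ f ∈ S, ∃ a b, a ∈ e ∧ b ∈ f ∧ (a = b ∨ G.Adj a b)

/-- `G` contains no cycle of length `n`. -/
def CycleFree {V : Type*} (G : SimpleGraph V) (n : ℕ) : Prop :=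
  ∀ (v : V) (c : G.Walk v v), c.IsCycle → c.length ≠ n

open List in
lemma no_cycle_list {V : Type*} {G : SimpleGraph V} {n : ℕ} (hn : 3 ≤ n) (h : CycleFree G n)
    (l : List V) (hl : l.length = n) (hnd : l.Nodup) (hch : l.IsChain G.Adj)
    (hcl : ∀ x ∈ l.getLast?, ∀ y ∈ l.head?, G.Adj x y) : False := by
  have hne : l ≠ [] := by rintro rfl; simp at hl; omega
  have hadj : G.Adj (l.getLast hne) (l.head hne) :=
    hcl _ (List.getLast?_eq_some_getLast hne) _ (List.head?_eq_some_head hne)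
  have hp : (SimpleGraph.Walk.ofSupport l hne hch).IsPath := by
    rw [SimpleGraph.Walk.isPath_def, SimpleGraph.Walk.support_ofSupport]; exact hnd
  have hlen := SimpleGraph.Walk.length_ofSupport hne hch
  refine h _ (SimpleGraph.Walk.cons hadj (SimpleGraph.Walk.ofSupport l hne hch)) ?_ ?_
  · rw [SimpleGraph.Walk.cons_isCycle_iff]
    refine ⟨hp, fun he => ?_⟩
    have := hp.length_eq_one_of_mem_edges (by rw [Sym2.eq_swap]; exact he)
    omega
  · simp only [SimpleGraph.Walk.length_cons, hlen]; omega

lemma no_C5 {V : Type*} {G : SimpleGraph V} (h : CycleFree G 5) (a b c d e : V)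
    (h1 : G.Adj a b) (h2 : G.Adj b c) (h3 : G.Adj c d) (h4 : G.Adj d e) (h5 : G.Adj e a)
    (n1 : a ≠ c) (n2 : a ≠ d) (n3 : b ≠ d) (n4 : b ≠ e) (n5 : c ≠ e) : False := by
  refine no_cycle_list (by norm_num) h [a, b, c, d, e] rfl ?_ ?_ ?_
  · have := h1.ne; have := h2.ne; have := h3.ne; have := h4.ne; have := h5.ne
    simp only [List.nodup_cons, List.mem_cons, List.not_mem_nil]
    grind
  · simp [h1, h2, h3, h4]
  · simp [h5]

section semicomplete

variable {ι : Type*} (R : ι → ι → Prop)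

lemma head_oins [DecidableRel R] (v : ι) (l : List ι) :
    ∀ y ∈ (l.orderedInsert R v).head?, y = v ∨ y ∈ l.head? := by
  cases l with
  | nil => simp
  | cons x l =>
    simp only [List.orderedInsert_cons]
    split_ifs <;> simp

lemma chain_oins [DecidableRel R] (hR : ∀ x y, R x y ∨ R y x) (v : ι) (l : List ι)
    (hl : l.IsChain R) : (l.orderedInsert R v).IsChain R := by
  induction l with
  | nil => simp
  | cons x l ih =>
    simp only [List.orderedInsert_cons]
    rw [List.isChain_cons] at hl
    split_ifs with h
    · rw [List.isChain_cons, List.isChain_cons]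
      exact ⟨by simpa using h, hl⟩
    · rw [List.isChain_cons]
      refine ⟨fun y hy => ?_, ih hl.2⟩
      rcases head_oins R v l y hy with rfl | hy
      · exact (hR x y).resolve_right h
      · exact hl.1 y hy

lemma last_oins [DecidableRel R] (v : ι) (l : List ι) (h : ∃ x ∈ l, R v x) :
    (l.orderedInsert R v).getLast? = l.getLast? := by
  induction l with
  | nil => simp at h
  | cons x l ih =>
    simp only [List.orderedInsert_cons]
    split_ifs with hx
    · simp
    · obtain ⟨y, hy, hvy⟩ := h
      have hyl : y ∈ l := by
        rcases List.mem_cons.1 hy with rfl | h'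
        · exact absurd hvy hx
        · exact h'
      have := ih ⟨y, hyl, hvy⟩
      have hne : l ≠ [] := List.ne_nil_of_mem hyl
      have hne2 : l.orderedInsert R v ≠ [] := by
        intro h0
        have := List.orderedInsert_length R l v
        simp [h0] at this
      rw [List.getLast?_cons_of_ne_nil hne2, List.getLast?_cons_of_ne_nil hne, this]

/-- Rédei -/
lemma redei [DecidableEq ι] (hR : ∀ x y, R x y ∨ R y x) (T : Finset ι) :
    ∃ l : List ι, l.Nodup ∧ l.IsChain R ∧ ∀ x, x ∈ l ↔ x ∈ T := by
  classical
  induction T using Finset.induction_on with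
  | empty => exact ⟨[], by simp⟩
  | insert v T hv ih =>
    obtain ⟨l, h1, h2, h3⟩ := ih
    refine ⟨l.orderedInsert R v, ?_, chain_oins R hR v l h2, ?_⟩
    · rw [(List.perm_orderedInsert R v l).nodup_iff, List.nodup_cons]
      exact ⟨by rw [h3]; exact hv, h1⟩
    · intro x; simp [List.mem_orderedInsert, h3]

open Relation in
lemma crossing (P : ι → Prop) {x y : ι} (h : ReflTransGen R x y) (hx : ¬ P x) (hy : P y) :
    ∃ p q, ¬ P p ∧ P q ∧ R p q := by
  induction h with
  | refl => exact absurd hy hx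
  | tail h1 h2 ih =>
    rename_i b c
    by_cases hb : P b
    · exact ih hb
    · exact ⟨b, c, hb, hy, h2⟩

open Relation in
lemma ham_path_end [Fintype ι] (hR : ∀ x y, R x y ∨ R y x) (j : ι)
    (hj : ∀ y, ReflTransGen R y j) :
    ∃ l : List ι, l.Nodup ∧ l.IsChain R ∧ l.getLast? = some j ∧ ∀ x, x ∈ l := by
  classical
  have key : ∀ n : ℕ, n < Fintype.card ι →
      ∃ l : List ι, l.Nodup ∧ l.IsChain R ∧ l.getLast? = some j ∧ l.length = n + 1 := by
    intro n
    induction n with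
    | zero => intro _; exact ⟨[j], by simp⟩
    | succ n ih =>
      intro hn
      obtain ⟨l, h1, h2, h3, h4⟩ := ih (by omega)
      have : ∃ v, v ∉ l := by
        by_contra hcon
        push Not at hcon
        have h5 : l.toFinset = Finset.univ := by ext x; simp [hcon x]
        have := List.toFinset_card_of_nodup h1
        rw [h5, Finset.card_univ] at this
        omega
      obtain ⟨v, hv⟩ := this
      obtain ⟨p, q, hp, hq, hpq⟩ := crossing R (fun x => x ∈ l) (hj v) hv
        (List.mem_of_getLast? h3)
      refine ⟨l.orderedInsert R p, ?_, chain_oins R hR p l h2, ?_, ?_⟩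
      · rw [(List.perm_orderedInsert R p l).nodup_iff, List.nodup_cons]
        exact ⟨hp, h1⟩
      · rw [last_oins R p l ⟨q, hq, hpq⟩, h3]
      · rw [List.orderedInsert_length, h4]
  have hpos : 0 < Fintype.card ι := Fintype.card_pos_iff.2 ⟨j⟩
  obtain ⟨l, h1, h2, h3, h4⟩ := key (Fintype.card ι - 1) (by omega)
  refine ⟨l, h1, h2, h3, ?_⟩
  have h5 : l.toFinset = Finset.univ := by
    rw [← Finset.card_eq_iff_eq_univ, List.toFinset_card_of_nodup h1, h4]; omega
  intro x
  rw [← List.mem_toFinset, h5]; simp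

open Relation in
lemma nodup_path {i j : ι} (h : ReflTransGen R i j) :
    ∃ l : List ι, l.Nodup ∧ l.IsChain R ∧ l.head? = some i ∧ l.getLast? = some j := by
  induction h with
  | refl => exact ⟨[i], by simp⟩
  | tail h1 h2 ih =>
    rename_i b c
    obtain ⟨l, n1, n2, n3, n4⟩ := ih
    by_cases hc : c ∈ l
    · obtain ⟨s, t, rfl⟩ := List.append_of_mem hc
      refine ⟨s ++ [c], ?_, ?_, ?_, by simp⟩
      · exact n1.sublist (by simp)
      · exact (List.isChain_split.1 n2).1
      · cases s <;> simp_all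
    · refine ⟨l ++ [c], ?_, ?_, ?_, by simp⟩
      · rw [List.nodup_append]; simp_all
        rintro a ha rfl; exact hc ha
      · rw [List.isChain_append]; simp_all
      · rw [List.head?_append, n3]; rfl

/-- closed lists -/
def CycL (l : List ι) : Prop :=
  l.Nodup ∧ l.IsChain R ∧ ∀ x ∈ l.getLast?, ∀ y ∈ l.head?, R x y

lemma cyc_rotate {l : List ι} (h : CycL R l) {y : ι} (hy : y ∈ l) :
    ∃ l', CycL R l' ∧ l'.length = l.length ∧ l'.getLast? = some y ∧ ∀ x, x ∈ l' ↔ x ∈ l := by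
  obtain ⟨s, t, rfl⟩ := List.append_of_mem hy
  obtain ⟨h1, h2, h3⟩ := h
  refine ⟨t ++ (s ++ [y]), ⟨?_, ?_, ?_⟩, ?_, ?_, ?_⟩
  · have : (t ++ (s ++ [y])).Perm (s ++ y :: t) := by
      refine List.perm_append_comm.trans ?_
      simp
    exact this.nodup_iff.2 h1
  · have h4 := List.isChain_split.1 h2
    rw [List.isChain_append]
    refine ⟨(List.isChain_cons.1 h4.2).2, h4.1, ?_⟩
    intro x hx z hz
    apply h3
    · rw [List.getLast?_append, List.getLast?_cons]; simp_all
    · cases s <;> simp_all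
  · intro x hx z hz
    have hxy : x = y := by
      rw [← List.append_assoc] at hx; simp at hx; exact hx.symm
    subst hxy
    cases t with
    | nil =>
      apply h3
      · simp
      · cases s <;> simp_all
    | cons w t =>
      have h4 := (List.isChain_split.1 h2).2
      simp at hz
      subst hz
      exact (List.isChain_cons_cons.1 h4).1
  · simp; omega
  · rw [← List.append_assoc]; simp
  · intro x; simp; tauto

open Relation in
lemma cyc_step [Fintype ι] (hR : ∀ x y, R x y ∨ R y x) (hs : ∀ x y, ReflTransGen R x y)
    {l : List ι} (h : CycL R l) (hne : l ≠ []) (hlt : l.length < Fintype.card ι) :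
    (∃ l', CycL R l' ∧ l'.length = l.length + 1) ∨
      (l.length = 1 ∧ ∃ l', CycL R l' ∧ l'.length = 3) := by
  classical
  have hex : ∃ v, v ∉ l := by
    by_contra hcon
    push Not at hcon
    have h5 : l.toFinset = Finset.univ := by ext x; simp [hcon x]
    have := List.toFinset_card_of_nodup h.1
    rw [h5, Finset.card_univ] at this
    omega
  by_cases hb : ∃ v, v ∉ l ∧ (∃ x ∈ l, R v x) ∧ ∃ y ∈ l, R y v
  · left
    obtain ⟨v, hv, ⟨x, hx, hvx⟩, y, hy, hyv⟩ := hb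
    obtain ⟨l', ⟨c1, c2, c3⟩, hlen, hlast, hmem⟩ := cyc_rotate R h hy
    refine ⟨l'.orderedInsert R v, ⟨?_, chain_oins R hR v l' c2, ?_⟩, ?_⟩
    · rw [(List.perm_orderedInsert R v l').nodup_iff, List.nodup_cons]
      exact ⟨by rw [hmem]; exact hv, c1⟩
    · rw [last_oins R v l' ⟨x, (hmem x).2 hx, hvx⟩, hlast]
      intro a ha b hb
      simp at ha; subst ha
      rcases head_oins R v l' b hb with rfl | hb
      · exact hyv
      · exact c3 _ hlast _ hb
    · rw [List.orderedInsert_length, hlen]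
  · push Not at hb
    obtain ⟨c, hc⟩ := List.exists_mem_of_ne_nil l hne
    have hoi : ∃ o i, o ∉ l ∧ i ∉ l ∧ (∀ x ∈ l, ¬ R o x) ∧ (∀ x ∈ l, ¬ R x i) ∧ R o i := by
      obtain ⟨v, hv⟩ := hex
      by_cases hvI : ∀ x ∈ l, ¬ R x v
      · obtain ⟨p, q, hp, hq, hpq⟩ := crossing R (fun z => z ∉ l ∧ ∀ x ∈ l, ¬ R x z) (hs c v)
          (fun hh => hh.1 hc) ⟨hv, hvI⟩
        have hpl : p ∉ l := fun hpl => hq.2 p hpl hpq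
        refine ⟨p, q, hpl, hq.1, ?_, hq.2, hpq⟩
        intro x hx hpx
        exact hp ⟨hpl, hb p hpl ⟨x, hx, hpx⟩⟩
      · have hvO : ∀ x ∈ l, ¬ R v x := fun x hx hvx => hvI (hb v hv ⟨x, hx, hvx⟩)
        obtain ⟨p, q, hp, hq, hpq⟩ := crossing R (fun z => ¬ (z ∉ l ∧ ∀ x ∈ l, ¬ R z x)) (hs v c)
          (fun hh => hh ⟨hv, hvO⟩) (fun hh => hh.1 hc)
        rw [not_not] at hp
        have hql : q ∉ l := fun hql => hp.2 q hql hpq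
        refine ⟨p, q, hp.1, hql, hp.2, ?_, hpq⟩
        have : ∃ x ∈ l, R q x := by
          by_contra hcon
          push Not at hcon
          exact hq ⟨hql, hcon⟩
        exact hb q hql this
    obtain ⟨o, i, ho, hi, hoL, hiL, hoi⟩ := hoi
    have hoL' : ∀ x ∈ l, R x o := fun x hx => (hR x o).resolve_right (hoL x hx)
    have hiL' : ∀ x ∈ l, R i x := fun x hx => (hR i x).resolve_right (hiL x hx)
    have hne_oi : o ≠ i := by
      rintro rfl; exact hoL c hc (hiL' c hc)
    have build : ∀ m : List ι, m ≠ [] → m.Nodup → m.IsChain R → (∀ x ∈ m, x ∈ l) →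
        CycL R (m ++ [o, i]) := by
      intro m hm m1 m2 m3
      refine ⟨?_, ?_, ?_⟩
      · rw [List.nodup_append]
        refine ⟨m1, by simp [hne_oi], ?_⟩
        intro a ha b hb hab
        subst hab
        simp at hb
        rcases hb with rfl | rfl
        · exact ho (m3 _ ha)
        · exact hi (m3 _ ha)
      · rw [List.isChain_append]
        refine ⟨m2, by simp [hoi], ?_⟩
        intro x hx y hy
        simp at hy; subst hy
        exact hoL' x (m3 _ (List.mem_of_getLast? hx))
      · intro x hx y hy
        have hxi : x = i := by
          simp [List.getLast?_append] at hx; exact hx.symm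
        subst hxi
        rw [List.head?_append_of_ne_nil _ hm] at hy
        exact hiL' y (m3 _ (List.mem_of_head? hy))
    cases l with
    | nil => exact absurd rfl hne
    | cons x m =>
      by_cases hm : m = []
      · right
        subst hm
        exact ⟨rfl, _, build [x] (by simp) (by simp) (by simp) (by simp), rfl⟩
      · left
        refine ⟨_, build m hm (List.nodup_cons.1 h.1).2 (List.isChain_cons.1 h.2.1).2
          (fun y hy => List.mem_cons_of_mem _ hy), by simp⟩

open Relation in
lemma cyc_all [Fintype ι] (hR : ∀ x y, R x y ∨ R y x) (hs : ∀ x y, ReflTransGen R x y)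
    (n : ℕ) (hn : 3 ≤ n) (hcard : n ≤ Fintype.card ι) : ∃ l, CycL R l ∧ l.length = n := by
  induction n, hn using Nat.le_induction with
  | base =>
    have hpos : 0 < Fintype.card ι := by omega
    obtain ⟨c⟩ := Fintype.card_pos_iff.1 hpos
    have h1 : CycL R [c] := ⟨by simp, by simp, by simpa using hR c c⟩
    rcases cyc_step R hR hs h1 (by simp) (by simp; omega) with ⟨l, hl, hlen⟩ | ⟨_, h⟩
    · simp at hlen
      rcases cyc_step R hR hs hl (by rintro rfl; simp at hlen) (by omega) with ⟨l', hl', hlen'⟩ | ⟨h0, _⟩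
      · exact ⟨l', hl', by omega⟩
      · omega
    · exact h
  | succ n hn ih =>
    obtain ⟨l, hl, hlen⟩ := ih (by omega)
    rcases cyc_step R hR hs hl (by rintro rfl; simp at hlen; omega) (by omega) with ⟨l', hl', hlen'⟩ | ⟨h0, _⟩
    · exact ⟨l', hl', by omega⟩
    · omega

end semicomplete

section items

variable {V ι : Type*}

/-- Items: pairs `(a i, b i)` across the bipartition, pairwise linked. -/
def Items (G : SimpleGraph V) (C : V → Prop) (a b : ι → V) : Prop :=
  Function.Injective a ∧ Function.Injective b ∧ (∀ i, C (a i)) ∧ (∀ i, ¬ C (b i)) ∧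
    ∀ i j, G.Adj (a i) (b j) ∨ G.Adj (a j) (b i)

/-- Vertex list of a list of items. -/
def fl (a b : ι → V) (l : List ι) : List V := l.flatMap fun x => [b x, a x]

lemma fl_cons (a b : ι → V) (x : ι) (l : List ι) : fl a b (x :: l) = b x :: a x :: fl a b l := by
  simp [fl]

lemma fl_append (a b : ι → V) (l m : List ι) : fl a b (l ++ m) = fl a b l ++ fl a b m := by
  simp [fl]

lemma fl_nil (a b : ι → V) : fl a b [] = [] := rfl

lemma fl_length (a b : ι → V) (l : List ι) : (fl a b l).length = 2 * l.length := by
  induction l with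
  | nil => rfl
  | cons x l ih => rw [fl_cons]; simp [ih]; omega

lemma fl_head (a b : ι → V) (l : List ι) : (fl a b l).head? = l.head?.map b := by
  cases l with
  | nil => rfl
  | cons x l => rw [fl_cons]; simp

lemma fl_last (a b : ι → V) (l : List ι) : (fl a b l).getLast? = l.getLast?.map a := by
  rcases List.eq_nil_or_concat l with rfl | ⟨m, x, rfl⟩
  · rfl
  · simp [fl_append, fl_cons, fl_nil, List.getLast?_append]

lemma mem_fl {a b : ι → V} {l : List ι} {v : V} :
    v ∈ fl a b l ↔ ∃ x ∈ l, v = b x ∨ v = a x := by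
  simp [fl]

variable {G : SimpleGraph V} {C : V → Prop} {a b : ι → V}

/-- the item digraph -/
def IR (G : SimpleGraph V) (a b : ι → V) (i j : ι) : Prop := G.Adj (a i) (b j)

lemma Items.tot (h : Items G C a b) (i j : ι) : IR G a b i j ∨ IR G a b j i := h.2.2.2.2 i j

lemma Items.adj (h : Items G C a b) (i : ι) : G.Adj (a i) (b i) := by
  have := h.tot i i; simpa [IR] using this

lemma Items.ne (h : Items G C a b) (i j : ι) : a i ≠ b j := by
  intro e
  exact h.2.2.2.1 j (e ▸ h.2.2.1 i)

lemma fl_chain (h : Items G C a b) {l : List ι} (hl : l.IsChain (IR G a b)) :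
    (fl a b l).IsChain G.Adj := by
  induction l with
  | nil => simp [fl_nil]
  | cons x l ih =>
    rw [List.isChain_cons] at hl
    rw [fl_cons, List.isChain_cons, List.isChain_cons]
    refine ⟨by simpa using (h.adj x).symm, ?_, ih hl.2⟩
    intro y hy
    rw [fl_head] at hy
    simp at hy
    obtain ⟨z, hz, rfl⟩ := hy
    exact hl.1 z hz

lemma fl_nodup (h : Items G C a b) {l : List ι} (hl : l.Nodup) : (fl a b l).Nodup := by
  induction l with
  | nil => simp [fl_nil]
  | cons x l ih =>
    rw [List.nodup_cons] at hl
    rw [fl_cons, List.nodup_cons, List.nodup_cons]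
    refine ⟨?_, ?_, ih hl.2⟩
    · rw [List.mem_cons, mem_fl]
      rintro (h1 | ⟨z, hz, h1 | h1⟩)
      · exact h.ne x x h1.symm
      · exact hl.1 (h.2.1 h1 ▸ hz)
      · exact h.ne z x h1.symm
    · rw [mem_fl]
      rintro ⟨z, hz, h1 | h1⟩
      · exact h.ne x z h1
      · exact hl.1 (h.1 h1 ▸ hz)

/-- trimmed vertex list -/
lemma trim_eq (a b : ι → V) (x z : ι) (m : List ι) :
    fl a b (x :: m ++ [z]) = [b x] ++ (a x :: fl a b m ++ [b z]) ++ [a z] := by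
  simp [fl_append, fl_cons, fl_nil]

lemma trim_chain (h : Items G C a b) {x z : ι} {m : List ι}
    (hl : (x :: m ++ [z]).IsChain (IR G a b)) :
    (a x :: fl a b m ++ [b z]).IsChain G.Adj := by
  have := fl_chain h hl
  rw [trim_eq] at this
  exact this.left_of_append.right_of_append

lemma trim_nodup (h : Items G C a b) {x z : ι} {m : List ι} (hl : (x :: m ++ [z]).Nodup) :
    (a x :: fl a b m ++ [b z]).Nodup := by
  have := fl_nodup h hl
  rw [trim_eq] at this
  exact (List.nodup_append.1 (List.nodup_append.1 this).1).2.1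

open Relation

lemma chain_reach {R : ι → ι → Prop} {l : List ι} (hl : l.IsChain R) :
    (∀ x ∈ l.head?, ∀ y ∈ l, ReflTransGen R x y) ∧ (∀ z ∈ l.getLast?, ∀ y ∈ l, ReflTransGen R y z) := by
  induction l with
  | nil => simp
  | cons x l ih =>
    rw [List.isChain_cons] at hl
    obtain ⟨ih1, ih2⟩ := ih hl.2
    constructor
    · intro x' hx' y hy
      simp at hx'; subst hx'
      rcases List.mem_cons.1 hy with rfl | hy
      · exact .refl
      · cases l with
        | nil => simp at hy
        | cons w l =>
          exact (ih1 w (by simp) y hy).head (hl.1 w (by simp))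
    · intro z hz y hy
      cases l with
      | nil => simp at hz hy; subst hz; subst hy; exact .refl
      | cons w l =>
        rw [List.getLast?_cons_cons] at hz
        rcases List.mem_cons.1 hy with rfl | hy
        · exact (ih2 z hz w (by simp)).head (hl.1 w (by simp))
        · exact ih2 z hz y hy

lemma split_ends {l : List ι} (hl : 2 ≤ l.length) : ∃ x m z, l = x :: m ++ [z] := by
  cases l with
  | nil => simp at hl
  | cons x l =>
    rcases List.eq_nil_or_concat l with rfl | ⟨m, z, rfl⟩
    · simp at hl
    · exact ⟨x, m, z, by simp⟩

lemma length_of_full [Fintype ι] {l : List ι} (h1 : l.Nodup) (h2 : ∀ x, x ∈ l) :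
    l.length = Fintype.card ι := by
  classical
  rw [← List.toFinset_card_of_nodup h1, Finset.card_eq_iff_eq_univ]
  ext x; simp [h2 x]

lemma items_strong [Fintype ι] (h : Items G C a b) {k : ℕ} (hk : 3 ≤ k)
    (hc : CycleFree G (2 * k)) (hcard : k ≤ Fintype.card ι)
    (hs : ∀ x y, ReflTransGen (IR G a b) x y) : False := by
  obtain ⟨l, ⟨h1, h2, h3⟩, hlen⟩ := cyc_all (IR G a b) h.tot hs k hk hcard
  refine no_cycle_list (by omega) hc (fl a b l) (by rw [fl_length, hlen]) (fl_nodup h h1)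
    (fl_chain h h2) ?_
  intro x hx y hy
  rw [fl_last] at hx; rw [fl_head] at hy
  simp at hx hy
  obtain ⟨x, hx, rfl⟩ := hx
  obtain ⟨y, hy, rfl⟩ := hy
  exact h3 x hx y hy

lemma items_succ [Fintype ι] (h : Items G C a b) {k : ℕ} (hk : 3 ≤ k)
    (hc : CycleFree G (2 * k)) (hcard : Fintype.card ι = k + 1) : False := by
  classical
  obtain ⟨l, h1, h2, h3⟩ := redei (IR G a b) h.tot Finset.univ
  simp at h3
  have hlen := length_of_full h1 h3
  obtain ⟨x, m, z, rfl⟩ := split_ends (l := l) (by omega)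
  have hr := chain_reach h2
  have hx : ∀ y, ReflTransGen (IR G a b) x y := fun y => hr.1 x (by simp) y (h3 y)
  have hz : ∀ y, ReflTransGen (IR G a b) y z := fun y =>
    hr.2 z (by simp [List.getLast?_cons]) y (h3 y)
  by_cases hzx : ReflTransGen (IR G a b) z x
  · exact items_strong h hk hc (by omega) (fun p q => ((hz p).trans hzx).trans (hx q))
  · have hadj : IR G a b x z := (h.tot x z).resolve_right (fun h' => hzx (.single h'))
    refine no_cycle_list (by omega) hc _ ?_ (trim_nodup h h1) (trim_chain h h2) ?_
    · simp [fl_length] at hlen ⊢; omega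
    · simp [List.getLast?_cons]
      exact SimpleGraph.Adj.symm hadj

/-- `u` is an extra partner for `a j`. -/
def ExtB (G : SimpleGraph V) (C : V → Prop) (a b : ι → V) (j : ι) (u : V) : Prop :=
  ¬ C u ∧ (∀ i, u ≠ b i) ∧ G.Adj (a j) u ∧ ∀ x, G.Adj (a x) u ∨ G.Adj (a j) (b x)

/-- `u` is an extra partner for `b i`. -/
def ExtA (G : SimpleGraph V) (C : V → Prop) (a b : ι → V) (i : ι) (u : V) : Prop :=
  C u ∧ (∀ x, u ≠ a x) ∧ G.Adj u (b i) ∧ ∀ x, G.Adj u (b x) ∨ G.Adj (a x) (b i)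

lemma ext_last [Fintype ι] (h : Items G C a b) {k : ℕ} (hk : 3 ≤ k)
    (hc : CycleFree G (2 * k)) (hcard : Fintype.card ι = k) (j : ι) (u : V)
    (hu : ExtB G C a b j u) (hj : ∀ y, ReflTransGen (IR G a b) y j) :
    ∀ x, ReflTransGen (IR G a b) j x := by
  obtain ⟨l, h1, h2, h3, h4⟩ := ham_path_end (IR G a b) h.tot j hj
  have hlen := length_of_full h1 h4
  obtain ⟨x, m, z, rfl⟩ := split_ends (l := l) (by omega)
  have hr := chain_reach h2
  have hx : ∀ y, ReflTransGen (IR G a b) x y := fun y => hr.1 x (by simp) y (h4 y)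
  have hzj : z = j := by simpa [List.getLast?_cons] using h3
  subst hzj
  by_contra hcon
  have hzx : ¬ IR G a b z x := fun hh => hcon (fun y => (hx y).head hh)
  have hadj : G.Adj (a x) u := (hu.2.2.2 x).resolve_right hzx
  refine no_cycle_list (by omega) hc ((a x :: fl a b m ++ [b z]) ++ [a z, u]) ?_ ?_ ?_ ?_
  · simp [fl_length] at hlen ⊢; omega
  · have hfull := fl_nodup h h1
    rw [trim_eq, List.append_assoc] at hfull
    have hf := (List.nodup_append.1 hfull).2.1
    have : (a x :: fl a b m ++ [b z]) ++ [a z, u] = ((a x :: fl a b m ++ [b z]) ++ [a z]) ++ [u] := by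
      simp
    rw [this, List.nodup_append]
    refine ⟨hf, by simp, ?_⟩
    intro v hv w hw hvw
    simp at hw
    subst hw; subst hvw
    have hv2 : v ∈ fl a b (x :: m ++ [z]) := by
      rw [trim_eq, List.append_assoc]; exact List.mem_append_right _ hv
    obtain ⟨y, _, hy | hy⟩ := mem_fl.1 hv2
    · exact hu.2.1 y hy
    · exact hu.1 (hy ▸ h.2.2.1 y)
  · rw [List.isChain_append]
    refine ⟨trim_chain h h2, by simpa using hu.2.2.1, ?_⟩
    simp [List.getLast?_cons]
    exact SimpleGraph.Adj.symm (h.adj z)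
  · simp [List.getLast?_cons]
    exact SimpleGraph.Adj.symm hadj

lemma Items.swap (h : Items G C a b) : Items G (fun v => ¬ C v) b a :=
  ⟨h.2.1, h.1, h.2.2.2.1, fun i => by simpa using h.2.2.1 i, fun i j => by
    rcases h.tot j i with h' | h'
    · left; exact SimpleGraph.Adj.symm h'
    · right; exact SimpleGraph.Adj.symm h'⟩

lemma swap_reach {x y : ι} (hxy : ReflTransGen (IR G a b) x y) : ReflTransGen (IR G b a) y x := by
  induction hxy with
  | refl => exact .refl
  | tail _ h2 ih => exact ih.head (SimpleGraph.Adj.symm h2)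

lemma ext_first [Fintype ι] (h : Items G C a b) {k : ℕ} (hk : 3 ≤ k)
    (hc : CycleFree G (2 * k)) (hcard : Fintype.card ι = k) (i : ι) (u : V)
    (hu : ExtA G C a b i u) (hi : ∀ y, ReflTransGen (IR G a b) i y) :
    ∀ x, ReflTransGen (IR G a b) x i := by
  intro x
  refine swap_reach (ext_last h.swap hk hc hcard i u ?_ (fun y => swap_reach (hi y)) x)
  exact ⟨by simpa using hu.1, hu.2.1, SimpleGraph.Adj.symm hu.2.2.1, fun x => by
    rcases hu.2.2.2 x with h' | h'
    · left; exact SimpleGraph.Adj.symm h'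
    · right; exact SimpleGraph.Adj.symm h'⟩

lemma option_items (h : Items G C a b) {u' u : V} (hu' : C u') (hu : ¬ C u)
    (h1 : ∀ x, u' ≠ a x) (h2 : ∀ x, u ≠ b x) (hl : G.Adj u' u)
    (hx : ∀ x, G.Adj u' (b x) ∨ G.Adj (a x) u) :
    Items G C (fun o : Option ι => o.elim u' a) (fun o : Option ι => o.elim u b) := by
  refine ⟨?_, ?_, ?_, ?_, ?_⟩
  · rintro (_ | x) (_ | y) e
    · rfl
    · exact (h1 y e).elim
    · exact (h1 x e.symm).elim
    · exact congrArg some (h.1 e)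
  · rintro (_ | x) (_ | y) e
    · rfl
    · exact (h2 y e).elim
    · exact (h2 x e.symm).elim
    · exact congrArg some (h.2.1 e)
  · rintro (_ | x)
    · exact hu'
    · exact h.2.2.1 x
  · rintro (_ | x)
    · exact hu
    · exact h.2.2.2.1 x
  · rintro (_ | x) (_ | y)
    · exact Or.inl hl
    · exact hx y
    · exact (hx x).symm
    · exact h.tot x y

lemma ext_both [Fintype ι] (h : Items G C a b) {k : ℕ} (hk : 3 ≤ k)
    (hc : CycleFree G (2 * k)) (hcard : Fintype.card ι = k) (i j : ι) (u u' : V)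
    (hu : ExtB G C a b j u) (hu' : ExtA G C a b i u')
    (hlink : G.Adj u' u ∨ G.Adj (a j) (b i))
    (hns : ¬ ∀ x y, ReflTransGen (IR G a b) x y) :
    ¬ ReflTransGen (IR G a b) i j := by
  classical
  intro hij
  by_cases hji : ReflTransGen (IR G a b) j i
  · -- same component
    have hh : ∃ p, ¬ ReflTransGen (IR G a b) j p := by
      by_contra hcon
      push Not at hcon
      exact hns fun x y => (ext_first h hk hc hcard i u' hu' (fun y => hij.trans (hcon y)) x).trans
        (hij.trans (hcon y))
    have hl : ∃ q, ¬ ReflTransGen (IR G a b) q i := by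
      by_contra hcon
      push Not at hcon
      exact hns fun x y => ((hcon x).trans hij).trans
        (ext_last h hk hc hcard j u hu (fun y => (hcon y).trans hij) y)
    obtain ⟨p, hp⟩ := hh
    obtain ⟨q, hq⟩ := hl
    obtain ⟨Q, q1, q2, q3, q4⟩ := nodup_path (IR G a b) hij
    have hQ := chain_reach q2
    have hpQ : p ∉ Q := fun hpQ => hp (hji.trans (hQ.1 i q3 p hpQ))
    have hqQ : q ∉ Q := fun hqQ => hq ((hQ.2 j q4 q hqQ).trans hji)
    obtain ⟨T, t1, t2, t3⟩ := redei (IR G a b) h.tot (Finset.univ \ Q.toFinset)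
    simp at t3
    have hpT := (t3 p).2 hpQ
    have hqT := (t3 q).2 hqQ
    have hpq : p ≠ q := by
      rintro rfl
      have := h.tot p j
      rcases this with h' | h'
      · exact hq ((ReflTransGen.single h').trans hji)
      · exact hp (.single h')
    have hTlen : 2 ≤ T.length := by
      rw [← List.toFinset_card_of_nodup t1]
      have : ({p, q} : Finset ι) ⊆ T.toFinset := by
        intro x hx; simp at hx; rcases hx with rfl | rfl <;> simpa
      have := Finset.card_le_card this
      rwa [Finset.card_pair hpq] at this
    obtain ⟨x, m, z, rfl⟩ := split_ends hTlen
    have hT := chain_reach t2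
    have hxp := hT.1 x (by simp) p hpT
    have hqz := hT.2 z (by simp [List.getLast?_cons]) q hqT
    have hjx : ¬ IR G a b j x := fun h' => hp (hxp.head h')
    have hzi : ¬ IR G a b z i := fun h' => hq (hqz.tail h')
    have hxu : G.Adj (a x) u := (hu.2.2.2 x).resolve_right hjx
    have hzu : G.Adj u' (b z) := (hu'.2.2.2 z).resolve_right hzi
    have hfulln : (Q ++ (x :: m ++ [z])).Nodup := by
      rw [List.nodup_append]
      refine ⟨q1, t1, ?_⟩
      intro v hv w hw hvw
      subst hvw
      exact (t3 v).1 hw hv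
    have hlen := length_of_full hfulln (fun v => by
      by_cases hv : v ∈ Q
      · exact List.mem_append_left _ hv
      · exact List.mem_append_right _ ((t3 v).2 hv))
    have hmemall : ∀ v ∈ fl a b Q ++ (a x :: fl a b m ++ [b z]), v ∈ fl a b (Q ++ (x :: m ++ [z])) := by
      intro v hv
      rw [fl_append, trim_eq]
      simp only [List.mem_append] at hv ⊢
      tauto
    have hune : ∀ v ∈ fl a b Q ++ (a x :: fl a b m ++ [b z]), v ≠ u := by
      rintro v hv rfl
      obtain ⟨y, _, hy | hy⟩ := mem_fl.1 (hmemall _ hv)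
      · exact hu.2.1 y hy
      · exact hu.1 (hy ▸ h.2.2.1 y)
    have hune' : ∀ v ∈ fl a b Q ++ (a x :: fl a b m ++ [b z]), v ≠ u' := by
      rintro v hv rfl
      obtain ⟨y, _, hy | hy⟩ := mem_fl.1 (hmemall _ hv)
      · exact h.2.2.2.1 y (hy ▸ hu'.1)
      · exact hu'.2.1 y hy
    have hnd : (fl a b Q ++ (a x :: fl a b m ++ [b z])).Nodup := by
      have := fl_nodup h hfulln
      rw [fl_append, trim_eq] at this
      rw [List.nodup_append] at this ⊢
      refine ⟨this.1, (List.nodup_append.1 (List.nodup_append.1 this.2.1).1).2.1, ?_⟩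
      intro v hv w hw
      refine this.2.2 v hv w ?_
      simp only [List.mem_append] at hw ⊢
      tauto
    have huu : u' ≠ u := fun e => hu.1 (e ▸ hu'.1)
    have hnd2 : (fl a b Q ++ (u :: (a x :: fl a b m ++ [b z]))).Nodup := by
      rw [List.nodup_middle, List.nodup_cons]
      exact ⟨fun hm => hune u hm rfl, hnd⟩
    refine no_cycle_list (by omega) hc
      (u' :: (fl a b Q ++ (u :: (a x :: fl a b m ++ [b z])))) ?_ ?_ ?_ ?_ |>.elim
    · simp [fl_length] at hlen ⊢; omega
    · rw [List.nodup_cons]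
      refine ⟨fun hm => ?_, hnd2⟩
      rw [List.mem_append, List.mem_cons] at hm
      rcases hm with hm | hm | hm
      · exact hune' _ (List.mem_append_left _ hm) rfl
      · exact huu hm
      · exact hune' _ (List.mem_append_right _ hm) rfl
    · rw [List.isChain_cons, List.isChain_append, List.isChain_cons]
      refine ⟨?_, fl_chain h q2, ⟨?_, trim_chain h t2⟩, ?_⟩
      · rw [List.head?_append, fl_head, q3]
        simpa using hu'.2.2.1
      · simpa using SimpleGraph.Adj.symm hxu
      · rw [fl_last, q4]
        simpa using hu.2.2.1
    · simp [List.getLast?_cons, List.getLast?_append]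
      exact SimpleGraph.Adj.symm hzu
  · -- extra item
    have hl : G.Adj u' u := hlink.resolve_right (fun h' => hji (.single h'))
    have hx : ∀ x, G.Adj u' (b x) ∨ G.Adj (a x) u := by
      intro x
      rcases hu.2.2.2 x with h1 | h1
      · exact Or.inr h1
      · rcases hu'.2.2.2 x with h2 | h2
        · exact Or.inl h2
        · exact (hji ((ReflTransGen.single (show IR G a b j x from h1)).tail (show IR G a b x i from h2))).elim
    have hI : Items G C (fun o : Option ι => o.elim u' a) (fun o : Option ι => o.elim u b) :=
      option_items h hu'.1 hu.1 hu'.2.1 hu.2.1 hl hx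
    exact items_succ hI hk hc (by rw [Fintype.card_option, hcard])

end items

section bip

variable {V : Type*}

lemma exists_top {ι : Type*} (le : ι → ι → Prop) (htot : ∀ x y, le x y ∨ le y x)
    (htr : ∀ x y z, le x y → le y z → le x z) (s : Finset ι) (hs : s.Nonempty) :
    ∃ m ∈ s, ∀ x ∈ s, le x m := by
  classical
  induction hs using Finset.Nonempty.cons_induction with
  | singleton a => exact ⟨a, by simp, by simpa using htot a a⟩
  | cons a s ha hs ih =>
    obtain ⟨m, hm, h⟩ := ih
    rcases htot a m with h1 | h1
    · refine ⟨m, by simp [hm], ?_⟩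
      intro x hx
      rcases Finset.mem_cons.1 hx with rfl | hx
      · exact h1
      · exact h x hx
    · refine ⟨a, by simp, ?_⟩
      intro x hx
      rcases Finset.mem_cons.1 hx with rfl | hx
      · simpa using htot x x
      · exact htr _ _ _ (h x hx) h1

lemma find_lower {ι : Type*} [Fintype ι] (le : ι → ι → Prop) (htot : ∀ x y, le x y ∨ le y x)
    (htr : ∀ x y z, le x y → le y z → le x z) (JA IB : ι → Prop)
    (hJ : ∀ j, JA j → ∃ y, ¬ le y j) (hI : ∀ i, IB i → ∃ y, ¬ le i y)
    (hIJ : ∀ i j, IB i → JA j → ¬ le i j) (hns : ∃ x y, ¬ le x y) :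
    ∃ P : ι → Prop, (∀ x y, le x y → P y → P x) ∧ (∃ x, P x) ∧ (∃ y, ¬ P y) ∧
      (∀ j, JA j → P j) ∧ (∀ i, IB i → ¬ P i) := by
  classical
  have hrefl : ∀ x, le x x := fun x => by simpa using htot x x
  by_cases h1 : ∃ j, JA j
  · obtain ⟨j, hj⟩ := h1
    obtain ⟨m, hm, hm2⟩ := exists_top le htot htr (Finset.univ.filter JA) ⟨j, by simp [hj]⟩
    simp at hm hm2
    refine ⟨fun x => le x m, fun x y hxy hy => htr _ _ _ hxy hy, ⟨m, hrefl m⟩, hJ m hm, hm2, ?_⟩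
    exact fun i hi => hIJ i m hi hm
  · push Not at h1
    by_cases h2 : ∃ i, IB i
    · obtain ⟨i, hi⟩ := h2
      obtain ⟨m, hm, hm2⟩ := exists_top (fun x y => le y x) (fun x y => htot y x)
        (fun x y z h h' => htr _ _ _ h' h) (Finset.univ.filter IB) ⟨i, by simp [hi]⟩
      simp at hm hm2
      obtain ⟨y, hy⟩ := hI m hm
      refine ⟨fun x => ¬ le m x, fun x y hxy hy h => hy (htr _ _ _ h hxy), ⟨y, hy⟩,
        ⟨m, by simpa using hrefl m⟩, fun j hj => (h1 j hj).elim, ?_⟩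
      intro i hi
      simpa using hm2 i hi
    · push Not at h2
      obtain ⟨x, y, hxy⟩ := hns
      exact ⟨fun z => le z y, fun _ _ h h' => htr _ _ _ h h', ⟨y, hrefl y⟩, ⟨x, hxy⟩,
        fun j hj => (h1 j hj).elim, fun i hi => (h2 i hi).elim⟩

variable [Fintype V] [DecidableEq V]

lemma konig (Sp : Finset (V × V)) (k : ℕ) :
    (∃ A B : Finset V, A.card + B.card < k ∧ ∀ p ∈ Sp, p.1 ∈ A ∨ p.2 ∈ B) ∨
    (∃ T : Finset V, T.card = k ∧ ∃ g : V → V, Set.InjOn g T ∧ ∀ x ∈ T, (x, g x) ∈ Sp) := by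
  classical
  set L : Finset V := Sp.image Prod.fst with hL
  by_cases hLk : L.card < k
  · left
    exact ⟨L, ∅, by simpa using hLk, fun p hp => Or.inl (Finset.mem_image_of_mem _ hp)⟩
  push Not at hLk
  let N : V → Finset V := fun x => Finset.univ.filter fun y => (x, y) ∈ Sp
  let d := L.card - k
  let t : L → Finset (V ⊕ Fin d) := fun x => (N x).disjSum Finset.univ
  by_cases hall : ∀ s : Finset L, s.card ≤ (s.biUnion t).card
  · right
    obtain ⟨f, hf, hft⟩ := (Finset.all_card_le_biUnion_card_iff_exists_injective t).1 hall
    let M : Finset L := Finset.univ.filter fun x => (f x).isLeft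
    have hM : k ≤ M.card := by
      have h1 : (Finset.univ.filter fun x : L => ¬ (f x).isLeft).card ≤ d := by
        have : ((Finset.univ.filter fun x : L => ¬ (f x).isLeft).image f).card ≤
            ((Finset.univ : Finset (Fin d)).map Function.Embedding.inr : Finset (V ⊕ Fin d)).card := by
          apply Finset.card_le_card
          intro z hz
          rw [Finset.mem_image] at hz
          obtain ⟨x, hx2, rfl⟩ := hz
          rw [Finset.mem_filter] at hx2
          rcases hfx : f x with w | w
          · rw [hfx] at hx2; simp at hx2
          · simp
        rw [Finset.card_image_of_injective _ hf] at this
        simpa using this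
      have h2 := Finset.card_filter_add_card_filter_not (s := (Finset.univ : Finset L)) (fun x : L => (f x).isLeft = true)
      simp only [Finset.card_univ, Fintype.card_coe] at h2
      have : (Finset.univ.filter fun x : L => (f x).isLeft = true).card = M.card := rfl
      omega
    obtain ⟨M', hM', hM'c⟩ := Finset.exists_subset_card_eq hM
    refine ⟨M'.map (Function.Embedding.subtype _), by simpa using hM'c, ?_⟩
    let g : V → V := fun x => if hx : x ∈ L then (f ⟨x, hx⟩).elim id (fun _ => x) else x
    refine ⟨g, ?_, ?_⟩
    · intro x hx y hy hxy
      simp at hx hy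
      obtain ⟨hx, hx'⟩ := hx
      obtain ⟨hy, hy'⟩ := hy
      have hx2 := hM' hx'
      have hy2 := hM' hy'
      simp [M] at hx2 hy2
      simp only [g, dif_pos hx, dif_pos hy] at hxy
      rcases hfx : f ⟨x, hx⟩ with w | w
      · rcases hfy : f ⟨y, hy⟩ with w' | w'
        · rw [hfx, hfy] at hxy
          simp at hxy
          subst hxy
          have := hf (hfx.trans hfy.symm)
          simpa using this
        · rw [hfy] at hy2; simp at hy2
      · rw [hfx] at hx2; simp at hx2
    · intro x hx
      simp at hx
      obtain ⟨hx, hx'⟩ := hx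
      have hx2 := hM' hx'
      simp [M] at hx2
      simp only [g, dif_pos hx]
      have hft' := hft ⟨x, hx⟩
      rcases hfx : f ⟨x, hx⟩ with w | w
      · rw [hfx] at hft'
        simpa [t, N] using hft'
      · rw [hfx] at hx2; simp at hx2
  · left
    push Not at hall
    obtain ⟨s, hs⟩ := hall
    have hne : s.Nonempty := by
      rw [Finset.nonempty_iff_ne_empty]; rintro rfl; simp at hs
    have h1 : (s.biUnion fun x => N x).disjSum (Finset.univ : Finset (Fin d)) ⊆ s.biUnion t := by
      intro z hz
      rcases z with w | w
      · simpa [t] using hz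
      · obtain ⟨x, hx⟩ := hne
        simp only [Finset.mem_biUnion]
        exact ⟨x, hx, by simp [t]⟩
    have h2 := Finset.card_le_card h1
    rw [Finset.card_disjSum] at h2
    simp at h2
    let X : Finset V := s.map (Function.Embedding.subtype _)
    have hXL : X ⊆ L := by
      intro x hx; simp [X] at hx; exact hx.1
    refine ⟨L \ X, s.biUnion fun x => N x, ?_, ?_⟩
    · have hXc : X.card = s.card := by simp [X]
      have := Finset.card_sdiff_add_card_eq_card hXL
      have := Finset.card_le_card hXL
      omega
    · intro p hp
      by_cases hpX : p.1 ∈ X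
      · right
        simp [X] at hpX
        obtain ⟨q1, q2⟩ := hpX
        simp only [Finset.mem_biUnion]
        exact ⟨_, q2, by simp [N, hp]⟩
      · left
        rw [Finset.mem_sdiff]
        exact ⟨Finset.mem_image_of_mem _ hp, hpX⟩

variable (G : SimpleGraph V) [DecidableRel G.Adj]

lemma small_deg (Sp : Finset (V × V)) (hadj : ∀ p ∈ Sp, G.Adj p.1 p.2)
    (hl : ∀ p ∈ Sp, ∀ q ∈ Sp, G.Adj p.1 q.2 ∨ G.Adj q.1 p.2)
    (d : ℕ) (hA : ∀ x, (Sp.filter (fun p => p.1 = x)).card ≤ d)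
    (hB : ∀ x, (Sp.filter (fun p => p.2 = x)).card ≤ d)
    (v : V) (hv : (Sp.filter (fun p => p.1 = v)).card = d) (hd : 1 ≤ d) :
    Sp.card ≤ G.maxDegree ^ 2 := by
  classical
  set D := G.maxDegree with hD
  let Nb : Finset V := (Sp.filter (fun p => p.1 = v)).image Prod.snd
  have hNbc : Nb.card = d := by
    rw [← hv]
    apply Finset.card_image_of_injOn
    intro p hp q hq h
    simp at hp hq
    exact Prod.ext (hp.2.trans hq.2.symm) h
  have hNb : ∀ y, y ∈ Nb ↔ (v, y) ∈ Sp := by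
    intro y
    simp only [Nb, Finset.mem_image, Finset.mem_filter]
    constructor
    · rintro ⟨⟨p, q⟩, ⟨h1, h2⟩, h3⟩
      simp at h2 h3; subst h2; subst h3; exact h1
    · intro h; exact ⟨_, ⟨h, rfl⟩, rfl⟩
  let X : Finset V := Finset.univ.filter fun x => ∀ y ∈ Nb, G.Adj x y
  have hXN : ∀ y ∈ Nb, X ⊆ G.neighborFinset y := by
    intro y hy x hx
    simp [X] at hx ⊢
    exact (hx y hy).symm
  have hNe : Nb.Nonempty := Finset.card_pos.1 (by omega)
  have hXD : X.card ≤ D := by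
    obtain ⟨y, hy⟩ := hNe
    exact (Finset.card_le_card (hXN y hy)).trans (G.degree_le_maxDegree y)
  have hNbN : Nb ⊆ G.neighborFinset v := by
    intro y hy
    rw [hNb] at hy
    simpa using hadj _ hy
  have hdD : (G.neighborFinset v).card ≤ D := G.degree_le_maxDegree v
  have hdd : d ≤ D := by rw [← hNbc]; exact (Finset.card_le_card hNbN).trans hdD
  let S1 := Sp.filter fun p => p.1 ∈ X
  let S2 := Sp.filter fun p => p.1 ∉ X ∧ p.2 ∈ Nb
  let S3 := Sp.filter fun p => p.2 ∈ G.neighborFinset v \ Nb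
  have hcov : Sp ⊆ S1 ∪ (S2 ∪ S3) := by
    intro p hp
    by_cases h1 : p.1 ∈ X
    · simp [S1, hp, h1]
    by_cases h2 : p.2 ∈ Nb
    · simp only [Finset.mem_union]; right; left; exact Finset.mem_filter.2 ⟨hp, h1, h2⟩
    · simp only [Finset.mem_union]; right; right
      refine Finset.mem_filter.2 ⟨hp, ?_⟩
      have : ∃ y ∈ Nb, ¬ G.Adj p.1 y := by
        by_contra hcon
        push Not at hcon
        exact h1 (by simpa [X] using hcon)
      obtain ⟨y, hy, hy2⟩ := this
      have := (hl p hp _ ((hNb y).1 hy)).resolve_left hy2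
      simp only [Finset.mem_sdiff, SimpleGraph.mem_neighborFinset]
      exact ⟨this, h2⟩
  have c1 : S1.card ≤ d * X.card := by
    refine Finset.card_le_mul_card_image_of_maps_to (f := Prod.fst) (fun p hp => (Finset.mem_filter.1 hp).2) d ?_
    intro x _
    exact (Finset.card_le_card (Finset.filter_subset_filter _ (Finset.filter_subset _ _))).trans (hA x)
  have c2 : S2.card ≤ (D - X.card) * Nb.card := by
    refine Finset.card_le_mul_card_image_of_maps_to (f := Prod.snd) (fun p hp => (Finset.mem_filter.1 hp).2.2) _ ?_
    intro y hy
    have : ((S2.filter fun p => p.2 = y).image Prod.fst) ⊆ G.neighborFinset y \ X := by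
      intro x hx
      rw [Finset.mem_image] at hx
      obtain ⟨p, hp, rfl⟩ := hx
      rw [Finset.mem_filter, Finset.mem_filter] at hp
      obtain ⟨⟨h1, h2, _⟩, rfl⟩ := hp
      simp only [Finset.mem_sdiff, SimpleGraph.mem_neighborFinset]
      exact ⟨(hadj p h1).symm, h2⟩
    have := Finset.card_le_card this
    rw [Finset.card_image_of_injOn, Finset.card_sdiff_of_subset (hXN y hy)] at this
    · have h2 : (G.neighborFinset y).card ≤ D := G.degree_le_maxDegree y
      omega
    · intro p hp q hq h
      simp at hp hq
      exact Prod.ext h (hp.2.trans hq.2.symm)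
  have c3 : S3.card ≤ d * (G.neighborFinset v \ Nb).card := by
    refine Finset.card_le_mul_card_image_of_maps_to (f := Prod.snd) (fun p hp => (Finset.mem_filter.1 hp).2) d ?_
    intro x _
    exact (Finset.card_le_card (Finset.filter_subset_filter _ (Finset.filter_subset _ _))).trans (hB x)
  have c4 : (G.neighborFinset v \ Nb).card ≤ D - d := by
    rw [Finset.card_sdiff_of_subset hNbN, hNbc]; omega
  have ht := (Finset.card_le_card hcov).trans ((Finset.card_union_le _ _).trans
    (Nat.add_le_add_left (Finset.card_union_le _ _) _))
  rw [hNbc] at c2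
  have c3' := c3.trans (Nat.mul_le_mul_left d c4)
  obtain ⟨e, he⟩ := Nat.exists_eq_add_of_le hdd
  obtain ⟨f, hf⟩ := Nat.exists_eq_add_of_le hXD
  have e1 : D - d = e := by omega
  have e2 : D - X.card = f := by omega
  rw [e1] at c3'; rw [e2] at c2
  have : Sp.card ≤ d * X.card + f * d + d * e := by omega
  have h5 : d * X.card + f * d = d * D := by rw [hf]; ring
  rw [h5] at this
  calc Sp.card ≤ d * D + d * e := this
    _ ≤ D ^ 2 := by rw [he]; nlinarith

lemma small_sq (Sp : Finset (V × V)) (hadj : ∀ p ∈ Sp, G.Adj p.1 p.2)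
    (hl : ∀ p ∈ Sp, ∀ q ∈ Sp, G.Adj p.1 q.2 ∨ G.Adj q.1 p.2) :
    Sp.card ≤ G.maxDegree ^ 2 := by
  classical
  rcases Sp.eq_empty_or_nonempty with rfl | ⟨p0, hp0⟩
  · simp
  obtain ⟨vA, -, hvA⟩ := Finset.exists_max_image Finset.univ
    (fun x : V => (Sp.filter (fun p : V × V => p.1 = x)).card) ⟨p0.1, by simp⟩
  obtain ⟨vB, -, hvB⟩ := Finset.exists_max_image Finset.univ
    (fun x : V => (Sp.filter (fun p : V × V => p.2 = x)).card) ⟨p0.1, by simp⟩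
  have h1 : 1 ≤ (Sp.filter (fun p => p.1 = vA)).card :=
    (Finset.card_pos.2 ⟨p0, by simp [hp0]⟩).trans_le (hvA p0.1 (by simp))
  have h2 : 1 ≤ (Sp.filter (fun p => p.2 = vB)).card :=
    (Finset.card_pos.2 ⟨p0, by simp [hp0]⟩).trans_le (hvB p0.2 (by simp))
  rcases le_total (Sp.filter (fun p => p.2 = vB)).card (Sp.filter (fun p => p.1 = vA)).card with h | h
  · exact small_deg G Sp hadj hl _ (fun x => hvA x (by simp)) (fun x => (hvB x (by simp)).trans h) vA rfl h1
  · let Sq := Sp.map (Equiv.prodComm V V).toEmbedding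
    have hc : Sq.card = Sp.card := Finset.card_map _
    have hmem : ∀ p, p ∈ Sq ↔ p.swap ∈ Sp := by
      rintro ⟨x, y⟩
      simp [Sq]
    have hf1 : ∀ x, (Sq.filter (fun p => p.1 = x)).card = (Sp.filter (fun p => p.2 = x)).card := by
      intro x
      rw [Finset.filter_map, Finset.card_map]
      rfl
    have hf2 : ∀ x, (Sq.filter (fun p => p.2 = x)).card = (Sp.filter (fun p => p.1 = x)).card := by
      intro x
      rw [Finset.filter_map, Finset.card_map]
      rfl
    rw [← hc]
    refine small_deg G Sq ?_ ?_ _ (fun x => by rw [hf1]; exact hvB x (by simp))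
      (fun x => by rw [hf2]; exact (hvA x (by simp)).trans h) vB (hf1 vB) h2
    · intro p hp
      exact (hadj _ ((hmem p).1 hp)).symm
    · intro p hp q hq
      rcases hl _ ((hmem p).1 hp) _ ((hmem q).1 hq) with h | h
      · right; exact h.symm
      · left; exact h.symm

lemma cover_count (Sp : Finset (V × V)) (hadj : ∀ p ∈ Sp, G.Adj p.1 p.2) (A B : Finset V)
    (hcov : ∀ p ∈ Sp, p.1 ∈ A ∨ p.2 ∈ B) (hAB : ∀ x ∈ A, ∀ y ∈ B, G.Adj x y) :
    Sp.card + A.card * B.card ≤ (A.card + B.card) * G.maxDegree := by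
  classical
  set D := G.maxDegree
  let S1 := Sp.filter fun p => p.1 ∈ A ∧ p.2 ∉ B
  let S2 := Sp.filter fun p => p.2 ∈ B
  have hc : Sp ⊆ S1 ∪ S2 := by
    intro p hp
    by_cases h : p.2 ∈ B
    · simp [S1, S2, hp, h]
    · simp [S1, S2, hp, h, (hcov p hp).resolve_right h]
  have hdeg : ∀ y, (G.neighborFinset y).card ≤ D := fun y => G.degree_le_maxDegree y
  have c2 : S2.card ≤ D * B.card := by
    refine Finset.card_le_mul_card_image_of_maps_to (f := Prod.snd) (fun p hp => (Finset.mem_filter.1 hp).2) _ ?_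
    intro y hy
    refine le_trans ?_ (hdeg y)
    refine Finset.card_le_card_of_injOn Prod.fst ?_ ?_
    · intro p hp
      simp [S2] at hp ⊢
      have := hadj p hp.1.1
      rw [hp.2] at this; exact this.symm
    · intro p hp q hq h
      simp at hp hq
      exact Prod.ext h (hp.2.trans hq.2.symm)
  have c1 : S1.card ≤ (D - B.card) * A.card := by
    refine Finset.card_le_mul_card_image_of_maps_to (f := Prod.fst) (fun p hp => (Finset.mem_filter.1 hp).2.1) _ ?_
    intro x hx
    have hsub : B ⊆ G.neighborFinset x := fun y hy => by simpa using hAB x hx y hy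
    have : (S1.filter fun p => p.1 = x).card ≤ (G.neighborFinset x \ B).card := by
      refine Finset.card_le_card_of_injOn Prod.snd ?_ ?_
      · intro p hp
        simp [S1] at hp ⊢
        have := hadj p hp.1.1
        rw [hp.2] at this; exact ⟨this, hp.1.2.2⟩
      · intro p hp q hq h
        simp at hp hq
        exact Prod.ext (hp.2.trans hq.2.symm) h
    rw [Finset.card_sdiff_of_subset hsub] at this
    have := hdeg x
    omega
  have ht := (Finset.card_le_card hc).trans (Finset.card_union_le _ _)
  rcases A.eq_empty_or_nonempty with hA | ⟨x, hx⟩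
  · subst hA
    simp only [Finset.card_empty, mul_zero, zero_mul, zero_add, add_zero] at c1 ⊢
    rw [mul_comm]; omega
  · have hsub : B ⊆ G.neighborFinset x := fun y hy => by simpa using hAB x hx y hy
    have hBD := (Finset.card_le_card hsub).trans (hdeg x)
    obtain ⟨e, he⟩ := Nat.exists_eq_add_of_le hBD
    have e1 : D - B.card = e := by omega
    rw [e1] at c1
    have h3 : Sp.card ≤ e * A.card + D * B.card := by omega
    have h4 : (A.card + B.card) * D = A.card * B.card + e * A.card + D * B.card := by
      have : A.card * D = A.card * B.card + e * A.card := by rw [he]; ring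
      rw [add_mul, this]; ring
    rw [h4]; omega

open Relation in
lemma bipartite_bound (C : V → Prop) (Sp : Finset (V × V)) (hC : ∀ p ∈ Sp, C p.1 ∧ ¬ C p.2)
    (hadj : ∀ p ∈ Sp, G.Adj p.1 p.2)
    (hl : ∀ p ∈ Sp, ∀ q ∈ Sp, G.Adj p.1 q.2 ∨ G.Adj q.1 p.2)
    (k : ℕ) (hk : 4 ≤ k) (hc : CycleFree G (2 * k)) (hD : 1 ≤ G.maxDegree) :
    Sp.card + (k - 1) ≤ k * G.maxDegree := by
  classical
  by_cases hsmall : G.maxDegree + 1 ≤ k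
  · have h := small_sq G Sp hadj hl
    set D := G.maxDegree
    obtain ⟨e, rfl⟩ := Nat.exists_eq_add_of_le hsmall
    obtain ⟨f, hf⟩ := Nat.exists_eq_add_of_le hD
    rw [hf] at h ⊢
    have : 1 + f + 1 + e - 1 = 1 + f + e := by omega
    rw [this]
    nlinarith
  push Not at hsmall
  rcases konig Sp k with ⟨A, B, hABk, hcov⟩ | ⟨T, hT, g, hg, hgS⟩
  · have h1 : Sp.card ≤ (A.card + B.card) * G.maxDegree := by
      have c1 : (Sp.filter fun p => p.1 ∈ A).card ≤ A.card * G.maxDegree := by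
        have := cover_count G (Sp.filter fun p => p.1 ∈ A) (fun p hp => hadj p (Finset.mem_filter.1 hp).1)
          A ∅ (fun p hp => Or.inl (Finset.mem_filter.1 hp).2) (by simp)
        simpa using this
      have c2 : (Sp.filter fun p => p.2 ∈ B).card ≤ B.card * G.maxDegree := by
        have := cover_count G (Sp.filter fun p => p.2 ∈ B) (fun p hp => hadj p (Finset.mem_filter.1 hp).1)
          ∅ B (fun p hp => Or.inr (Finset.mem_filter.1 hp).2) (by simp)
        simpa using this
      have hs : Sp ⊆ (Sp.filter fun p => p.1 ∈ A) ∪ (Sp.filter fun p => p.2 ∈ B) := by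
        intro p hp
        simpa [hp] using hcov p hp
      have := (Finset.card_le_card hs).trans (Finset.card_union_le _ _)
      rw [add_mul]; omega
    obtain ⟨m, rfl⟩ : ∃ m, k = m + 1 := ⟨k - 1, by omega⟩
    have h2 : (A.card + B.card) * G.maxDegree ≤ m * G.maxDegree := Nat.mul_le_mul_right _ (by omega)
    rw [add_mul]; simp; omega
  · let a : T → V := fun x => x
    let b : T → V := fun x => g x
    have hcard : Fintype.card T = k := by simpa using hT
    have hIt : Items G C a b := by
      refine ⟨Subtype.val_injective, ?_, fun i => (hC _ (hgS i i.2)).1, fun i => (hC _ (hgS i i.2)).2, ?_⟩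
      · intro x y h
        exact Subtype.ext (hg x.2 y.2 h)
      · intro i j
        exact hl _ (hgS i i.2) _ (hgS j j.2)
    have hab : ∀ i, (a i, b i) ∈ Sp := fun i => hgS i i.2
    clear_value a b
    have hns : ¬ ∀ x y, ReflTransGen (IR G a b) x y := fun h =>
      items_strong hIt (by omega) hc (by omega) h
    have hone : ∀ p ∈ Sp, (∃ i, p.1 = a i) ∨ (∃ j, p.2 = b j) := by
      intro p hp
      by_contra hcon
      push Not at hcon
      refine items_succ (option_items hIt (hC p hp).1 (hC p hp).2 hcon.1 hcon.2 (hadj p hp) ?_)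
        (k := k) (by omega) hc (by rw [Fintype.card_option, hcard])
      intro x
      exact hl _ hp _ (hab x)
    let JA : T → Prop := fun j => ∃ u, (∀ i, u ≠ b i) ∧ (a j, u) ∈ Sp
    let IB : T → Prop := fun i => ∃ u, (∀ x, u ≠ a x) ∧ (u, b i) ∈ Sp
    have hJext : ∀ j u, (∀ i, u ≠ b i) → (a j, u) ∈ Sp → ExtB G C a b j u := by
      intro j u h1 h2
      exact ⟨(hC _ h2).2, h1, hadj _ h2, fun x => hl _ (hab x) _ h2⟩
    have hIext : ∀ i u, (∀ x, u ≠ a x) → (u, b i) ∈ Sp → ExtA G C a b i u := by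
      intro j u h1 h2
      exact ⟨(hC _ h2).1, h1, hadj _ h2, fun x => hl _ h2 _ (hab x)⟩
    obtain ⟨P, hP, ⟨x0, hx0⟩, ⟨y0, hy0⟩, hPJ, hPI⟩ := find_lower (ReflTransGen (IR G a b))
      (fun x y => (hIt.tot x y).imp .single .single) (fun x y z => .trans) JA IB
      (by
        rintro j ⟨u, h1, h2⟩
        by_contra hcon
        push Not at hcon
        have := ext_last hIt (by omega) hc hcard j u (hJext j u h1 h2) hcon
        exact hns fun x y => (hcon x).trans (this y))
      (by
        rintro i ⟨u, h1, h2⟩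
        by_contra hcon
        push Not at hcon
        have := ext_first hIt (by omega) hc hcard i u (hIext i u h1 h2) hcon
        exact hns fun x y => (this x).trans (hcon y))
      (by
        rintro i j ⟨u', h1, h2⟩ ⟨u, h3, h4⟩
        exact ext_both hIt (by omega) hc hcard i j u u' (hJext j u h3 h4) (hIext i u' h1 h2)
          (hl _ h2 _ h4) hns)
      (by push Not at hns; exact hns)
    let A : Finset V := (Finset.univ.filter P).image a
    let B : Finset V := (Finset.univ.filter fun x => ¬ P x).image b
    have hAc : A.card = (Finset.univ.filter P).card := Finset.card_image_of_injective _ hIt.1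
    have hBc : B.card = (Finset.univ.filter fun x => ¬ P x).card := Finset.card_image_of_injective _ hIt.2.1
    have hsum : A.card + B.card = k := by
      rw [hAc, hBc, Finset.card_filter_add_card_filter_not, Finset.card_univ, hcard]
    have hA1 : 1 ≤ A.card := Finset.card_pos.2 ⟨a x0, Finset.mem_image_of_mem _ (by simp [hx0])⟩
    have hB1 : 1 ≤ B.card := Finset.card_pos.2 ⟨b y0, Finset.mem_image_of_mem _ (by simp [hy0])⟩
    have hmA : ∀ i, P i → a i ∈ A := fun i hi => Finset.mem_image_of_mem _ (by simp [hi])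
    have hmB : ∀ i, ¬ P i → b i ∈ B := fun i hi => Finset.mem_image_of_mem _ (by simp [hi])
    have hfin := cover_count G Sp hadj A B ?_ ?_
    · rw [hsum] at hfin
      obtain ⟨e, he⟩ := Nat.exists_eq_add_of_le hA1
      obtain ⟨f, hf⟩ := Nat.exists_eq_add_of_le hB1
      have : k - 1 ≤ A.card * B.card := by
        rw [← hsum, he, hf]
        have : 1 + e + (1 + f) - 1 = 1 + e + f := by omega
        rw [this]; nlinarith
      omega
    · rintro ⟨x, y⟩ hp
      have key := hone _ hp
      simp only at key ⊢
      by_cases hx : ∃ i, x = a i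
      · obtain ⟨i, rfl⟩ := hx
        by_cases hy : ∃ j, y = b j
        · obtain ⟨j, rfl⟩ := hy
          by_cases hi : P i
          · exact Or.inl (hmA i hi)
          · right
            apply hmB
            intro hj
            exact hi (hP i j (.single (hadj _ hp)) hj)
        · push Not at hy
          exact Or.inl (hmA i (hPJ i ⟨y, hy, hp⟩))
      · obtain ⟨j, rfl⟩ := key.resolve_left hx
        push Not at hx
        exact Or.inr (hmB j (hPI j ⟨x, hx, hp⟩))
    · intro x hx y hy
      simp only [A, B, Finset.mem_image, Finset.mem_filter] at hx hy
      obtain ⟨i, ⟨_, hi⟩, rfl⟩ := hx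
      obtain ⟨j, ⟨_, hj⟩, rfl⟩ := hy
      exact (hIt.tot i j).resolve_right fun h => hj (hP j i (.single h) hi)

end bip

section red

variable {V : Type*} {G : SimpleGraph V} {E : V → V → Prop}

/-- strong clique as a relation -/
def SC (G : SimpleGraph V) (E : V → V → Prop) : Prop :=
  (∀ v w, E v w → E w v) ∧ (∀ v w, E v w → G.Adj v w) ∧
  ∀ v w x y, E v w → E x y → v = x ∨ v = y ∨ w = x ∨ w = y ∨
    G.Adj v x ∨ G.Adj v y ∨ G.Adj w x ∨ G.Adj w y

def NoC5 (G : SimpleGraph V) : Prop :=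
  ∀ a b c d e, G.Adj a b → G.Adj b c → G.Adj c d → G.Adj d e → G.Adj e a →
    a ≠ c → a ≠ d → b ≠ d → b ≠ e → c ≠ e → False

def Cov (G : SimpleGraph V) (E : V → V → Prop) : Prop :=
  ∃ w1 w2 w3 w4, G.Adj w2 w1 ∧ (G.Adj w3 w1 ∨ G.Adj w3 w2) ∧
    (G.Adj w4 w1 ∨ G.Adj w4 w2 ∨ G.Adj w4 w3) ∧
    ∀ x y, E x y → (x = w1 ∨ x = w2 ∨ x = w3 ∨ x = w4) ∨ (y = w1 ∨ y = w2 ∨ y = w3 ∨ y = w4)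

lemma net1 (h5 : NoC5 G) (hE : SC G E) {a b c b' x y : V} (hab : G.Adj a b) (hbc : G.Adj b c)
    (hac : G.Adj a c) (hbb : E b b') (h1 : b' ≠ a) (h2 : b' ≠ c)
    (hxy : E x y) (hxa : x ≠ a) (hxb : x ≠ b) (hxc : x ≠ c) (hya : y ≠ a) (hyb : y ≠ b) (hyc : y ≠ c)
    (hadj : G.Adj x a) : G.Adj x b := by
  have hs := G.adj_comm
  have e1 := hE.2.1 _ _ hbb
  have e2 := hE.2.1 _ _ hxy
  have c1 := h5 x y b c a
  have c2 := h5 x b' b c a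
  have c3 := h5 x y b' b a
  have n1 := hab.ne
  have n2 := hbc.ne
  have n3 := hac.ne
  rcases hE.2.2 _ _ _ _ hxy hbb with h | h | h | h | h | h | h | h <;> grind

lemma net2 (h5 : NoC5 G) (hE : SC G E) {a b c a' b' c' x y : V} (hab : G.Adj a b) (hbc : G.Adj b c)
    (hac : G.Adj a c) (haa : E a a') (hbb : E b b') (hcc : E c c')
    (h1 : a' ≠ b') (h2 : b' ≠ c') (h3 : a' ≠ c') (h4 : a' ≠ b) (h5' : a' ≠ c) (h6 : b' ≠ a)
    (h7 : b' ≠ c) (h8 : c' ≠ a) (h9 : c' ≠ b)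
    (hxy : E x y) (hxa : x ≠ a) (hxb : x ≠ b) (hxc : x ≠ c) (hya : y ≠ a) (hyb : y ≠ b) (hyc : y ≠ c) :
    (G.Adj x a ∧ G.Adj x b ∧ G.Adj x c) ∨ (G.Adj y a ∧ G.Adj y b ∧ G.Adj y c) := by
  have hs := fun u v => G.adj_comm u v
  have hba := hab.symm
  have hcb := hbc.symm
  have hca := hac.symm
  have hyx := hE.1 _ _ hxy
  have xab := net1 h5 hE hab hbc hac hbb h6 h7 hxy hxa hxb hxc hya hyb hyc
  have xbc := net1 h5 hE hbc hca hba hcc h9 h8 hxy hxb hxc hxa hyb hyc hya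
  have xca := net1 h5 hE hca hab hcb haa h5' h4 hxy hxc hxa hxb hyc hya hyb
  have yab := net1 h5 hE hab hbc hac hbb h6 h7 hyx hya hyb hyc hxa hxb hxc
  have ybc := net1 h5 hE hbc hca hba hcc h9 h8 hyx hyb hyc hya hxb hxc hxa
  have yca := net1 h5 hE hca hab hcb haa h5' h4 hyx hyc hya hyb hxc hxa hxb
  by_cases hx : G.Adj x a ∨ G.Adj x b ∨ G.Adj x c
  · left; tauto
  by_cases hy : G.Adj y a ∨ G.Adj y b ∨ G.Adj y c
  · right; tauto
  exfalso
  push Not at hx hy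
  have e1 := hE.2.1 _ _ haa
  have e2 := hE.2.1 _ _ hbb
  have e3 := hE.2.1 _ _ hcc
  have c1 := h5 x a' a b b'
  have c2 := h5 x b' b c c'
  have c3 := h5 x c' c a a'
  have c4 := h5 y a' a b b'
  have c5 := h5 y b' b c c'
  have c6 := h5 y c' c a a'
  have l1 : G.Adj x a' ∨ G.Adj y a' := by
    rcases hE.2.2 _ _ _ _ hxy haa with h | h | h | h | h | h | h | h <;> grind
  have l2 : G.Adj x b' ∨ G.Adj y b' := by
    rcases hE.2.2 _ _ _ _ hxy hbb with h | h | h | h | h | h | h | h <;> grind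
  have l3 : G.Adj x c' ∨ G.Adj y c' := by
    rcases hE.2.2 _ _ _ _ hxy hcc with h | h | h | h | h | h | h | h <;> grind
  rcases l1 with l1 | l1 <;> rcases l2 with l2 | l2 <;> rcases l3 with l3 | l3 <;> grind

lemma net (h5 : NoC5 G) (hE : SC G E) {a b c a' b' c' : V} (hab : G.Adj a b) (hbc : G.Adj b c)
    (hac : G.Adj a c) (haa : E a a') (hbb : E b b') (hcc : E c c')
    (h1 : a' ≠ b') (h2 : b' ≠ c') (h3 : a' ≠ c') (h4 : a' ≠ b) (h5' : a' ≠ c) (h6 : b' ≠ a)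
    (h7 : b' ≠ c) (h8 : c' ≠ a) (h9 : c' ≠ b) : Cov G E := by
  have key := fun x y => net2 (x := x) (y := y) h5 hE hab hbc hac haa hbb hcc h1 h2 h3 h4 h5' h6 h7 h8 h9
  by_cases hz : ∃ z, G.Adj z a ∧ G.Adj z b ∧ G.Adj z c
  · obtain ⟨z, z1, z2, z3⟩ := hz
    refine ⟨a, b, c, z, hab.symm, Or.inl hac.symm, Or.inl z1, ?_⟩
    have huniq : ∀ w, G.Adj w a ∧ G.Adj w b ∧ G.Adj w c → w = z := by
      rintro w ⟨w1, w2, w3⟩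
      by_contra hne
      exact h5 w a z b c w1 z1.symm z2 hbc w3.symm hne w2.ne hab.ne hac.ne z3.ne
    intro x y hxy
    have k1 := key x y hxy
    have u1 := huniq x
    have u2 := huniq y
    grind
  · push Not at hz
    refine ⟨a, b, c, a', hab.symm, Or.inl hac.symm, Or.inl (hE.2.1 _ _ haa).symm, ?_⟩
    intro x y hxy
    have k1 := key x y hxy
    have u1 := hz x
    have u2 := hz y
    grind

lemma tri2 (h5 : NoC5 G) (hE : SC G E) {a b c c' : V} (hab : E a b) (hbc : G.Adj b c)
    (hac : G.Adj a c) (hcc : E c c') (h1 : c' ≠ a) (h2 : c' ≠ b) : Cov G E := by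
  by_contra hcov
  have hab' := hE.2.1 _ _ hab
  have hcc' := hE.2.1 _ _ hcc
  -- main step with the normalization `x ~ a`
  have main : ∀ a b x y, E a b → G.Adj b c → G.Adj a c → c' ≠ a → c' ≠ b → E x y →
      x ≠ a → x ≠ b → x ≠ c → x ≠ c' → y ≠ a → y ≠ b → y ≠ c → y ≠ c' → G.Adj x a → False := by
    intro a b x y hab hbc hac h1 h2 hxy x1 x2 x3 x4 y1 y2 y3 y4 hxa
    have hab' := hE.2.1 _ _ hab
    have hxy' := hE.2.1 _ _ hxy
    rcases hE.2.2 _ _ _ _ hxy hcc with h | h | h | h | h | h | h | h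
    · exact x3 h
    · exact x4 h
    · exact y3 h
    · exact y4 h
    · exact hcov (net h5 hE h hac.symm hxa hxy hcc hab y4 h2 y2 y3 y1 x4.symm h1 x2.symm hbc.ne)
    · exact h5 x c' c b a h hcc'.symm hbc.symm hab'.symm hxa.symm x3 x2 h2 h1 hac.ne.symm
    · exact h5 x a b c y hxa hab' hbc h.symm hxy'.symm x2 x3 hac.ne y1.symm y2.symm
    · exact h5 x y c' c a hxy' h hcc'.symm hac.symm hxa.symm x4 x3 y3 y1 h1
  apply hcov
  refine ⟨a, b, c, c', hab'.symm, Or.inl hac.symm, Or.inr (Or.inr hcc'.symm), ?_⟩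
  intro x y hxy
  by_contra hcon
  push Not at hcon
  obtain ⟨⟨x1, x2, x3, x4⟩, y1, y2, y3, y4⟩ := hcon
  have hba := hE.1 _ _ hab
  have hyx := hE.1 _ _ hxy
  rcases hE.2.2 _ _ _ _ hxy hab with h | h | h | h | h | h | h | h
  · exact x1 h
  · exact x2 h
  · exact y1 h
  · exact y2 h
  · exact main a b x y hab hbc hac h1 h2 hxy x1 x2 x3 x4 y1 y2 y3 y4 h
  · exact main b a x y hba hac hbc h2 h1 hxy x2 x1 x3 x4 y2 y1 y3 y4 h
  · exact main a b y x hab hbc hac h1 h2 hyx y1 y2 y3 y4 x1 x2 x3 x4 h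
  · exact main b a y x hba hac hbc h2 h1 hyx y2 y1 y3 y4 x2 x1 x3 x4 h

lemma tri3 (h5 : NoC5 G) (hE : SC G E) {a b c : V} (hab : E a b) (hbc : E b c)
    (hac : E a c) : Cov G E := by
  by_contra hcov
  have main : ∀ a b c x y, E a b → E b c → E a c → E x y →
      x ≠ a → x ≠ b → x ≠ c → y ≠ a → y ≠ b → y ≠ c → G.Adj x a → False := by
    intro a b c x y hab hbc hac hxy x1 x2 x3 y1 y2 y3 hxa
    have ab := hE.2.1 _ _ hab
    have ac := hE.2.1 _ _ hac
    have bc := hE.2.1 _ _ hbc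
    have xy := hE.2.1 _ _ hxy
    rcases hE.2.2 _ _ _ _ hxy hbc with h | h | h | h | h | h | h | h
    · exact x2 h
    · exact x3 h
    · exact y2 h
    · exact y3 h
    · exact hcov (tri2 h5 hE hab h.symm hxa.symm hxy y1 y2)
    · exact hcov (tri2 h5 hE hac h.symm hxa.symm hxy y1 y3)
    · exact h5 x a c b y hxa ac bc.symm h.symm xy.symm x3 x2 ab.ne y1.symm y3.symm
    · exact h5 x a b c y hxa ab bc h.symm xy.symm x2 x3 ac.ne y1.symm y2.symm
  apply hcov
  have ab := hE.2.1 _ _ hab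
  have ac := hE.2.1 _ _ hac
  refine ⟨a, b, c, a, ab.symm, Or.inl ac.symm, Or.inr (Or.inl ab), ?_⟩
  intro x y hxy
  by_contra hcon
  push Not at hcon
  obtain ⟨⟨x1, x2, x3, -⟩, y1, y2, y3, -⟩ := hcon
  have hba := hE.1 _ _ hab
  have hyx := hE.1 _ _ hxy
  rcases hE.2.2 _ _ _ _ hxy hab with h | h | h | h | h | h | h | h
  · exact x1 h
  · exact x2 h
  · exact y1 h
  · exact y2 h
  · exact main a b c x y hab hbc hac hxy x1 x2 x3 y1 y2 y3 h
  · exact main b a c x y hba hac hbc hxy x2 x1 x3 y2 y1 y3 h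
  · exact main a b c y x hab hbc hac hyx y1 y2 y3 x1 x2 x3 h
  · exact main b a c y x hba hac hbc hyx y2 y1 y3 x2 x1 x3 h

/-- The relevant link edges. -/
def FF (G : SimpleGraph V) (E : V → V → Prop) (v w : V) : Prop :=
  G.Adj v w ∧ (E v w ∨ ∃ v' w', E v v' ∧ E w w' ∧ v' ≠ w')

lemma FF.symm (hE : SC G E) {v w : V} (h : FF G E v w) : FF G E w v := by
  refine ⟨h.1.symm, ?_⟩
  rcases h.2 with h | ⟨v', w', h1, h2, h3⟩
  · exact Or.inl (hE.1 _ _ h)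
  · exact Or.inr ⟨w', v', h2, h1, h3.symm⟩

lemma FF.ofE (hE : SC G E) {v w : V} (h : E v w) : FF G E v w := ⟨hE.2.1 _ _ h, Or.inl h⟩

lemma FF.ex (hE : SC G E) {v w : V} (h : FF G E v w) : ∃ w', E w w' := by
  rcases h.2 with h | ⟨v', w', h1, h2, h3⟩
  · exact ⟨v, hE.1 _ _ h⟩
  · exact ⟨w', h2⟩

lemma FF_tri1 (h5 : NoC5 G) (hE : SC G E) (hcov : ¬ Cov G E) {a b c : V} (hab : E a b)
    (hbc : FF G E b c) (hac : FF G E a c) : False := by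
  have main : ∀ a b, E a b → FF G E b c → FF G E a c → E c a → False := by
    intro a b hab hbc hac hca
    by_cases hbcE : E b c
    · exact hcov (tri3 h5 hE hab hbcE (hE.1 _ _ hca))
    · obtain ⟨b', c', hb, hc, hne⟩ := hbc.2.resolve_left hbcE
      by_cases hb' : b' = a
      · subst hb'
        by_cases hcb : c' = b
        · subst hcb; exact hbcE (hE.1 _ _ hc)
        · exact hcov (tri2 h5 hE hab hbc.1 hac.1 hc hne.symm hcb)
      · exact hcov (tri2 h5 hE hca (hE.2.1 _ _ hab) hbc.1.symm hb
          (fun e => hbcE (e ▸ hb)) hb')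
  obtain ⟨c', hc'⟩ := hbc.ex hE
  by_cases h1 : c' = a
  · subst h1; exact main _ b hab hbc hac hc'
  by_cases h2 : c' = b
  · subst h2; exact main _ a (hE.1 _ _ hab) hac hbc hc'
  exact hcov (tri2 h5 hE hab hbc.1 hac.1 hc' h1 h2)

lemma FF_tri (h5 : NoC5 G) (hE : SC G E) (hcov : ¬ Cov G E) {a b c : V} (hab : FF G E a b)
    (hbc : FF G E b c) (hac : FF G E a c) : False := by
  by_cases e1 : E a b
  · exact FF_tri1 h5 hE hcov e1 hbc hac
  by_cases e2 : E b c
  · exact FF_tri1 h5 hE hcov e2 (hac.symm hE) (hab.symm hE)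
  by_cases e3 : E a c
  · exact FF_tri1 h5 hE hcov e3 (hbc.symm hE) hab
  have e1' : ¬ E b a := fun h => e1 (hE.1 _ _ h)
  have e2' : ¬ E c b := fun h => e2 (hE.1 _ _ h)
  have e3' : ¬ E c a := fun h => e3 (hE.1 _ _ h)
  have sdr : ∀ x y z, E a x → E b y → E c z → x = y ∨ y = z ∨ x = z := by
    intro x y z hx hy hz
    by_contra hcon
    push Not at hcon
    refine hcov (net h5 hE hab.1 hbc.1 hac.1 hx hy hz hcon.1 hcon.2.1 hcon.2.2 ?_ ?_ ?_ ?_ ?_ ?_) <;>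
      (rintro rfl; contradiction)
  obtain ⟨a1, b1, ha1, hb1, n1⟩ := hab.2.resolve_left e1
  obtain ⟨b2, c2, hb2, hc2, n2⟩ := hbc.2.resolve_left e2
  obtain ⟨a3, c3, ha3, hc3, n3⟩ := hac.2.resolve_left e3
  have C1 : ∀ p q, p ≠ q → E a p → E a q → E c p → E b q → False := by
    intro p q hpq h1 h2 h3 h4
    refine h5 a p c b q (hE.2.1 _ _ h1) (hE.2.1 _ _ h3).symm hbc.1.symm (hE.2.1 _ _ h4)
      (hE.2.1 _ _ h2).symm hac.1.ne hab.1.ne ?_ hpq ?_ <;> (rintro rfl; contradiction)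
  have C2 : ∀ p q, p ≠ q → E b p → E b q → E c p → E a q → False := by
    intro p q hpq h1 h2 h3 h4
    refine h5 b p c a q (hE.2.1 _ _ h1) (hE.2.1 _ _ h3).symm hac.1.symm (hE.2.1 _ _ h4)
      (hE.2.1 _ _ h2).symm hbc.1.ne hab.1.ne.symm ?_ hpq ?_ <;> (rintro rfl; contradiction)
  have C3 : ∀ p q, p ≠ q → E c p → E c q → E a p → E b q → False := by
    intro p q hpq h1 h2 h3 h4
    refine h5 c p a b q (hE.2.1 _ _ h1) (hE.2.1 _ _ h3).symm hab.1 (hE.2.1 _ _ h4)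
      (hE.2.1 _ _ h2).symm hac.1.ne.symm hbc.1.ne.symm ?_ hpq ?_ <;> (rintro rfl; contradiction)
  have s1 := sdr a1 b1 c2 ha1 hb1 hc2
  have s2 := sdr a1 b1 c3 ha1 hb1 hc3
  have s3 := sdr a1 b2 c2 ha1 hb2 hc2
  have s4 := sdr a1 b2 c3 ha1 hb2 hc3
  have s5 := sdr a3 b1 c2 ha3 hb1 hc2
  have s6 := sdr a3 b1 c3 ha3 hb1 hc3
  have s7 := sdr a3 b2 c2 ha3 hb2 hc2
  have s8 := sdr a3 b2 c3 ha3 hb2 hc3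
  clear sdr
  grind

lemma color_both (h5 : NoC5 G) (hE : SC G E) (hcov : ¬ Cov G E) {a0 x y p q : V}
    (hxy : FF G E x y) (hp : FF G E a0 p) (hpx : FF G E p x) (hq : FF G E a0 q)
    (hqy : FF G E q y) : False := by
  have tri := fun {a b c} => FF_tri (a := a) (b := b) (c := c) h5 hE hcov
  by_cases h1 : x = a0
  · subst h1; exact tri hq hqy hxy
  by_cases h2 : y = a0
  · subst h2; exact tri hp hpx (hxy.symm hE)
  by_cases h3 : p = q
  · subst h3; exact tri hpx hxy hqy
  by_cases h4 : x = q
  · subst h4; exact tri hp hpx hq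
  by_cases h6 : p = y
  · subst h6; exact tri hq hqy hp
  exact h5 x p a0 q y hpx.1.symm hp.1.symm hq.1 hqy.1 hxy.1.symm h1 h4 h3 h6 (Ne.symm h2)

lemma color_neither (h5 : NoC5 G) (hE : SC G E) {a0 b0 x y : V} (h0 : E a0 b0)
    (hxy : FF G E x y) (hx : ¬ ∃ p, FF G E a0 p ∧ FF G E p x)
    (hy : ¬ ∃ p, FF G E a0 p ∧ FF G E p y) : False := by
  have f0 := FF.ofE hE h0
  have hyx := hxy.symm hE
  -- facts about each end
  have side : ∀ x y x', FF G E x y → (¬ ∃ p, FF G E a0 p ∧ FF G E p x) →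
      (¬ ∃ p, FF G E a0 p ∧ FF G E p y) → E x x' →
      x ≠ a0 ∧ x ≠ b0 ∧ G.Adj x' b0 ∧ ¬ FF G E a0 x' := by
    intro x y x' hxy hx hy hxx
    have n1 : x ≠ a0 := by rintro rfl; exact hx ⟨b0, f0, f0.symm hE⟩
    have n2 : x ≠ b0 := by rintro rfl; exact hy ⟨_, f0, hxy⟩
    have n3 : ¬ FF G E a0 x := fun h => hy ⟨x, h, hxy⟩
    have n4 : ¬ FF G E b0 x := fun h => hx ⟨b0, f0, h⟩
    have n5 : ¬ FF G E a0 x' := fun h => hx ⟨x', h, (FF.ofE hE hxx).symm hE⟩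
    have n6 : x' ≠ a0 := by rintro rfl; exact n3 ((FF.ofE hE hxx).symm hE)
    have n7 : x' ≠ b0 := by rintro rfl; exact n4 ((FF.ofE hE hxx).symm hE)
    refine ⟨n1, n2, ?_, n5⟩
    rcases hE.2.2 _ _ _ _ hxx h0 with h | h | h | h | h | h | h | h
    · exact (n1 h).elim
    · exact (n2 h).elim
    · exact (n6 h).elim
    · exact (n7 h).elim
    · exact (n3 ⟨h.symm, Or.inr ⟨b0, x', h0, hxx, n7.symm⟩⟩).elim
    · exact (n4 ⟨h.symm, Or.inr ⟨a0, x', hE.1 _ _ h0, hxx, n6.symm⟩⟩).elim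
    · exact (n5 ⟨h.symm, Or.inr ⟨b0, x, h0, hE.1 _ _ hxx, n2.symm⟩⟩).elim
    · exact h
  have hEF : ¬ E x y := by
    intro hE'
    obtain ⟨n1, n2, n3, n4⟩ := side x y y hxy hx hy hE'
    exact hy ⟨b0, f0, n3.symm, Or.inr ⟨a0, x, hE.1 _ _ h0, hE.1 _ _ hE', n1.symm⟩⟩
  obtain ⟨x', y', hxx, hyy, hne⟩ := hxy.2.resolve_left hEF
  obtain ⟨p1, p2, p3, p4⟩ := side x y x' hxy hx hy hxx
  obtain ⟨q1, q2, q3, q4⟩ := side y x y' hyx hy hx hyy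
  refine h5 x y y' b0 x' hxy.1 (hE.2.1 _ _ hyy) q3 p3.symm (hE.2.1 _ _ hxx).symm ?_ p2 q2 ?_ hne.symm
  · rintro rfl; exact hEF (hE.1 _ _ hyy)
  · rintro rfl; exact hEF hxx

lemma cov_count [Fintype V] [DecidableEq V] [DecidableRel G.Adj] (S : Finset (Sym2 V))
    (hS : (S : Set (Sym2 V)) ⊆ G.edgeSet) (hc : Cov G (fun v w => s(v, w) ∈ S)) :
    S.card + 3 ≤ 4 * G.maxDegree := by
  classical
  obtain ⟨w1, w2, w3, w4, h2, h3, h4, hcov⟩ := hc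
  obtain ⟨p3, hp3, hp3'⟩ : ∃ p, G.Adj w3 p ∧ (p = w1 ∨ p = w2) := by
    rcases h3 with h | h
    · exact ⟨_, h, Or.inl rfl⟩
    · exact ⟨_, h, Or.inr rfl⟩
  obtain ⟨p4, hp4, hp4'⟩ : ∃ p, G.Adj w4 p ∧ (p = w1 ∨ p = w2 ∨ p = w3) := by
    rcases h4 with h | h | h
    · exact ⟨_, h, Or.inl rfl⟩
    · exact ⟨_, h, Or.inr (Or.inl rfl)⟩
    · exact ⟨_, h, Or.inr (Or.inr rfl)⟩
  have hI : ∀ v, (G.incidenceFinset v).card ≤ G.maxDegree := fun v => by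
    rw [G.card_incidenceFinset_eq_degree]; exact G.degree_le_maxDegree v
  have hI' : ∀ v w, G.Adj v w → ((G.incidenceFinset v).erase s(v, w)).card + 1 ≤ G.maxDegree := by
    intro v w h
    rw [Finset.card_erase_add_one]
    · exact hI v
    · rw [SimpleGraph.mem_incidenceFinset]; exact ⟨h, by simp⟩
  have hsub : S ⊆ G.incidenceFinset w1 ∪ ((G.incidenceFinset w2).erase s(w2, w1) ∪
      ((G.incidenceFinset w3).erase s(w3, p3) ∪ (G.incidenceFinset w4).erase s(w4, p4))) := by
    intro e he
    have hee : e ∈ G.edgeSet := hS he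
    have hcase : w1 ∈ e ∨ w2 ∈ e ∨ w3 ∈ e ∨ w4 ∈ e := by
      induction e with
      | _ x y =>
        have := hcov x y he
        simp only [Sym2.mem_iff]
        grind
    have hin : ∀ v, v ∈ e → e ∈ G.incidenceFinset v := fun v hv => by
      rw [SimpleGraph.mem_incidenceFinset]; exact ⟨hee, hv⟩
    simp only [Finset.mem_union, Finset.mem_erase]
    by_cases m1 : w1 ∈ e
    · exact Or.inl (hin _ m1)
    by_cases m2 : w2 ∈ e
    · exact Or.inr (Or.inl ⟨by rintro rfl; simp at m1, hin _ m2⟩)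
    by_cases m3 : w3 ∈ e
    · refine Or.inr (Or.inr (Or.inl ⟨?_, hin _ m3⟩))
      rintro rfl
      rcases hp3' with rfl | rfl
      · simp at m1
      · simp at m2
    have m4 : w4 ∈ e := by tauto
    refine Or.inr (Or.inr (Or.inr ⟨?_, hin _ m4⟩))
    rintro rfl
    rcases hp4' with rfl | rfl | rfl
    · simp at m1
    · simp at m2
    · simp at m3
  have t := (Finset.card_le_card hsub).trans ((Finset.card_union_le _ _).trans
    (Nat.add_le_add_left ((Finset.card_union_le _ _).trans
      (Nat.add_le_add_left (Finset.card_union_le _ _) _)) _))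
  have i1 := hI w1
  have i2 := hI' w2 w1 h2
  have i3 := hI' w3 p3 hp3
  have i4 := hI' w4 p4 hp4
  omega

lemma main_nat [Fintype V] [DecidableEq V] [DecidableRel G.Adj] (k : ℕ) (hk : 4 ≤ k)
    (hc5 : CycleFree G 5) (hc2k : CycleFree G (2 * k))
    (hΔ : 1 ≤ G.maxDegree)
    (S : Finset (Sym2 V)) (hS : IsStrongClique G ↑S) :
    S.card + (k - 1) ≤ k * G.maxDegree := by
  classical
  have h5 : NoC5 G := fun a b c d e => no_C5 hc5 a b c d e
  have hE : SC G (fun v w => s(v, w) ∈ S) := by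
    refine ⟨fun v w h => by
      show s(w, v) ∈ S
      rw [Sym2.eq_swap]; exact h, fun v w h => hS.1 h, ?_⟩
    intro v w x y h1 h2
    obtain ⟨p, q, hp, hq, h⟩ := hS.2 _ h1 _ h2
    rw [Sym2.mem_iff] at hp hq
    grind
  by_cases hcov : Cov G (fun v w => s(v, w) ∈ S)
  · have := cov_count S hS.1 hcov
    obtain ⟨e, rfl⟩ := Nat.exists_eq_add_of_le hk
    obtain ⟨f, hf⟩ := Nat.exists_eq_add_of_le hΔ
    rw [hf] at this ⊢
    have h2 : 4 + e - 1 = 3 + e := by omega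
    rw [h2]
    nlinarith
  rcases S.eq_empty_or_nonempty with rfl | ⟨e0, he0⟩
  · simp only [Finset.card_empty, zero_add]
    calc k - 1 ≤ k * 1 := by omega
      _ ≤ _ := Nat.mul_le_mul_left _ hΔ
  induction e0 with
  | _ a0 b0 =>
  set E : V → V → Prop := fun v w => s(v, w) ∈ S with hEdef
  have h0 : E a0 b0 := he0
  let C : V → Prop := fun v => ∃ p, FF G E a0 p ∧ FF G E p v
  have cb : ∀ x y, FF G E x y → C x → C y → False := by
    rintro x y hxy ⟨p, hp, hpx⟩ ⟨q, hq, hqy⟩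
    exact color_both h5 hE hcov hxy hp hpx hq hqy
  have cn : ∀ x y, FF G E x y → ¬ C x → ¬ C y → False := fun x y hxy hx hy =>
    color_neither h5 hE h0 hxy hx hy
  let Sp : Finset (V × V) := Finset.univ.filter fun p => C p.1 ∧ s(p.1, p.2) ∈ S
  have hSp : ∀ p ∈ Sp, C p.1 ∧ E p.1 p.2 := fun p hp => (Finset.mem_filter.1 hp).2
  have hcard : S.card ≤ Sp.card := by
    have : S ⊆ Sp.image fun p => s(p.1, p.2) := by
      intro e he
      induction e with
      | _ x y =>
        have hf : FF G E x y := FF.ofE hE he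
        rw [Finset.mem_image]
        by_cases hx : C x
        · exact ⟨(x, y), Finset.mem_filter.2 ⟨Finset.mem_univ _, hx, he⟩, rfl⟩
        · have hy : C y := by by_contra hy; exact cn x y hf hx hy
          exact ⟨(y, x), Finset.mem_filter.2 ⟨Finset.mem_univ _, hy, hE.1 _ _ he⟩, Sym2.eq_swap⟩
    exact (Finset.card_le_card this).trans Finset.card_image_le
  have hC : ∀ p ∈ Sp, C p.1 ∧ ¬ C p.2 := fun p hp =>
    ⟨(hSp p hp).1, fun h => cb _ _ (FF.ofE hE (hSp p hp).2) (hSp p hp).1 h⟩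
  have hb := bipartite_bound G C Sp hC (fun p hp => hE.2.1 _ _ (hSp p hp).2) ?_ k hk hc2k hΔ
  · omega
  rintro ⟨x, y⟩ hp ⟨u, v⟩ hq
  obtain ⟨cx, cy⟩ := hC _ hp
  obtain ⟨cu, cv⟩ := hC _ hq
  have exy := (hSp _ hp).2
  have euv := (hSp _ hq).2
  simp only at cx cy cu cv exy euv ⊢
  by_cases e1 : x = u
  · subst e1; exact Or.inl (hE.2.1 _ _ euv)
  by_cases e2 : y = v
  · subst e2; exact Or.inl (hE.2.1 _ _ exy)
  rcases hE.2.2 _ _ _ _ exy euv with h | h | h | h | h | h | h | h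
  · exact (e1 h).elim
  · subst h; exact (cv cx).elim
  · subst h; exact (cy cu).elim
  · exact (e2 h).elim
  · exact (cb x u ⟨h, Or.inr ⟨y, v, exy, euv, e2⟩⟩ cx cu).elim
  · exact Or.inl h
  · exact Or.inr h.symm
  · exact (cn y v ⟨h, Or.inr ⟨x, u, hE.1 _ _ exy, hE.1 _ _ euv, e1⟩⟩ cy cv).elim

end red

/-- For `k ≥ 4`, if `G` has no cycle of length 5 and no cycle of length `2k`, and
`Δ(G) ≥ 1`, then the strong clique number of `G` is at most `kΔ(G) - (k - 1)`. -/
theorem stmt12 {V : Type*} [Fintype V] [DecidableEq V] (G : SimpleGraph V)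
    [DecidableRel G.Adj] (k : ℕ) (hk : 4 ≤ k)
    (hc5 : CycleFree G 5) (hc2k : CycleFree G (2 * k))
    (hΔ : 1 ≤ G.maxDegree)
    (S : Finset (Sym2 V)) (hS : IsStrongClique G ↑S) :
    (S.card : ℤ) ≤ k * G.maxDegree - (k - 1) := by
  have h := main_nat k hk hc5 hc2k hΔ S hS
  have h2 : ((S.card + (k - 1) : ℕ) : ℤ) ≤ ((k * G.maxDegree : ℕ) : ℤ) := by exact_mod_cast h
  push_cast [Nat.cast_sub (show 1 ≤ k by omega)] at h2
  linarith
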